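/- Let λ ∈ Y. Among the elements v ∈ W_f with v(λ) ∈ Y₊ there is a unique element v_λ of minimal length; the element w_λ := t_λ v_λ⁻¹ is the unique element of minimal length in the coset t_λ W_f, and ℓ(w_λ) = ℓ(t_λ) − ℓ(v_λ). -/

import Mathlib

open scoped Classical TensorProduct

noncomputable section

namespace SemiInf

/-- The data of a root datum together with its (finite) Weyl group:
finite-rank free `ℤ`-modules `X` and `Y` with a pairing, a finite group `W`
acting on both, a finite set of roots with a subset of positive roots, and a
coroot map. The axioms are collected in `Ctx.IsRootDatum`. -/
structure Ctx where
  X : Type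
  Y : Type
  [addX : AddCommGroup X]
  [addY : AddCommGroup Y]
  W : Type
  [grpW : Group W]
  [finW : Fintype W]
  [actX : DistribMulAction W X]
  [actY : DistribMulAction W Y]
  pair : Y →+ X →+ ℤ
  roots : Finset X
  pos : Finset X
  coroot : X → Y

attribute [instance] Ctx.addX Ctx.addY Ctx.grpW Ctx.finW Ctx.actX Ctx.actY

namespace Ctx

variable (C : Ctx)

/-- The axioms of a root datum (free finite-rank lattices, perfect pairing,
finite reduced crystallographic root system with a system of positive roots),
with `W` its Weyl group acting faithfully on `X` and `Y`. -/
structure IsRootDatum : Prop where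
  free_X : Module.Free ℤ C.X
  finite_X : Module.Finite ℤ C.X
  free_Y : Module.Free ℤ C.Y
  finite_Y : Module.Finite ℤ C.Y
  perfect_left : Function.Bijective fun y : C.Y => C.pair y
  perfect_right : Function.Bijective fun x : C.X => C.pair.flip x
  pos_subset : C.pos ⊆ C.roots
  root_decomp : ∀ α ∈ C.roots, α ∈ C.pos ∨ -α ∈ C.pos
  pos_neg_disjoint : ∀ α ∈ C.pos, -α ∉ C.pos
  zero_not_root : (0 : C.X) ∉ C.roots
  reduced : ∀ α ∈ C.roots, ∀ n : ℤ, n • α ∈ C.roots → n = 1 ∨ n = -1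
  coroot_self : ∀ α ∈ C.roots, C.pair (C.coroot α) α = 2
  isReflection : ∀ α ∈ C.roots, ∃ s : C.W,
    (∀ x : C.X, s • x = x - C.pair (C.coroot α) x • α) ∧
    (∀ y : C.Y, s • y = y - C.pair y α • C.coroot α)
  weyl_gen : ∀ w : C.W, w ∈ Subgroup.closure {s : C.W | ∃ α ∈ C.roots,
    (∀ x : C.X, s • x = x - C.pair (C.coroot α) x • α) ∧
    (∀ y : C.Y, s • y = y - C.pair y α • C.coroot α)}
  faithful_X : ∀ w : C.W, (∀ x : C.X, w • x = x) → w = 1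
  faithful_Y : ∀ w : C.W, (∀ y : C.Y, w • y = y) → w = 1
  pair_inv : ∀ (w : C.W) (y : C.Y) (x : C.X), C.pair (w • y) (w • x) = C.pair y x
  roots_stable : ∀ (w : C.W), ∀ α ∈ C.roots, w • α ∈ C.roots
  smul_coroot : ∀ (w : C.W), ∀ α ∈ C.roots, w • C.coroot α = C.coroot (w • α)
  exists_regular_X : ∃ ξ : C.X, ∀ α ∈ C.pos, 0 < C.pair (C.coroot α) ξ
  exists_regular_Y : ∃ η : C.Y, ∀ α ∈ C.pos, 0 < C.pair η α

/-- The length function of the finite Weyl group: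
`ℓ(w) = #{α ∈ 𝔯₊ : w(α) ∈ −𝔯₊}`. -/
def lenW (w : C.W) : ℕ := (C.pos.filter fun α => -(w • α) ∈ C.pos).card

/-- `w` is the longest element of the finite Weyl group iff it maps every
positive root to a negative root. -/
def IsLongest (w : C.W) : Prop := ∀ α ∈ C.pos, -(w • α) ∈ C.pos

/-- The set `Y₊` of dominant cocharacters. -/
def Ypos : Set C.Y := {l | ∀ α ∈ C.pos, 0 ≤ C.pair l α}

/-- The set `Y₊₊` of strictly dominant cocharacters. -/
def Yppos : Set C.Y := {l | ∀ α ∈ C.pos, 0 < C.pair l α}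

/-- The action of `W` on `Multiplicative Y`, as a homomorphism to `MulAut`. -/
def φext : C.W →* MulAut (Multiplicative C.Y) where
  toFun w :=
    { toFun := fun y => Multiplicative.ofAdd (w • Multiplicative.toAdd y)
      invFun := fun y => Multiplicative.ofAdd (w⁻¹ • Multiplicative.toAdd y)
      left_inv := fun y => by simp
      right_inv := fun y => by simp
      map_mul' := fun a b => by simp [smul_add] }
  map_one' := by
    apply MulEquiv.ext
    intro y
    simp
  map_mul' w₁ w₂ := by
    apply MulEquiv.ext
    intro y
    simp [mul_smul]

/-- The extended affine Weyl group `W_ext = W_f ⋉ Y`. -/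
abbrev Wext : Type := Multiplicative C.Y ⋊[C.φext] C.W

/-- The translation element `t_λ ∈ W_ext` associated with `λ ∈ Y`. -/
def t (l : C.Y) : C.Wext := SemidirectProduct.inl (Multiplicative.ofAdd l)

/-- The canonical embedding of the finite Weyl group in `W_ext`. -/
def σ (w : C.W) : C.Wext := SemidirectProduct.inr w

/-- The length function on `W_ext`, defined by
`ℓ(w t_λ) = Σ_{α ∈ 𝔯₊, w(α) ∈ 𝔯₊} |⟨λ,α⟩| + Σ_{α ∈ 𝔯₊, w(α) ∈ −𝔯₊} |1 − ⟨λ,α⟩|`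
(an element `g` of the semidirect product equals `w t_λ` for `w = g.right`
and `λ = w⁻¹ • g.left`). -/
def len (g : C.Wext) : ℕ :=
  ∑ α ∈ C.pos,
    if g.right • α ∈ C.pos
      then (C.pair (g.right⁻¹ • Multiplicative.toAdd g.left) α).natAbs
      else ((1 : ℤ) - C.pair (g.right⁻¹ • Multiplicative.toAdd g.left) α).natAbs

/-- The coroot lattice `ℤ𝔯∨ ⊆ Y`. -/
def corootLattice : AddSubgroup C.Y := AddSubgroup.closure (C.coroot '' ↑C.roots)

/-- The affine Weyl group `W_aff = W_f ⋉ ℤ𝔯∨`, as a subgroup of `W_ext`. -/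
def Waff : Subgroup C.Wext :=
  Subgroup.closure ((fun l => C.t l) '' ↑C.corootLattice ∪ Set.range C.σ)

/-- The set of elements of length `1` of `W_aff` (the simple affine
reflections). -/
def Saff : Set C.Wext := {g | g ∈ C.Waff ∧ C.len g = 1}

/-- The set `Ω` of elements of length `0` of `W_ext`. -/
def OmegaSet : Set C.Wext := {g | C.len g = 0}

/-- The Bruhat order on `W_aff`: `u ≤ v` iff some reduced expression of `v`
(as a word in `S_aff`) admits a subword which is an expression of `u`. -/
def bruhatAff (u v : C.Wext) : Prop :=
  ∃ l : List C.Wext, (∀ s ∈ l, s ∈ C.Saff) ∧ l.prod = v ∧ l.length = C.len v ∧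
    ∃ l' : List C.Wext, l'.Sublist l ∧ l'.prod = u

/-- The Bruhat order on `W_ext`, extending the Bruhat order of `W_aff` by
`ω u ≤ ω' v` iff `ω = ω'` and `u ≤ v`, for `ω, ω' ∈ Ω` and `u, v ∈ W_aff`. -/
def bruhat (x y : C.Wext) : Prop :=
  ∃ ω u v : C.Wext, ω ∈ C.OmegaSet ∧ u ∈ C.Waff ∧ v ∈ C.Waff ∧
    x = ω * u ∧ y = ω * v ∧ C.bruhatAff u v

/-- The set `W_ext⁺` of `w ∈ W_ext` such that `ℓ(t_μ w) = ℓ(t_μ) + ℓ(w)` for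
every dominant `μ`. -/
def WextPlus : Set C.Wext :=
  {w | ∀ μ ∈ C.Ypos, C.len (C.t μ * w) = C.len (C.t μ) + C.len w}

/-- The semiinfinite order on `W_ext`. -/
def siLE (w y : C.Wext) : Prop :=
  ∃ μ : C.Y, C.t μ * w ∈ C.WextPlus ∧ C.t μ * y ∈ C.WextPlus ∧
    C.bruhat (C.t μ * w) (C.t μ * y)

/-- The rational vector space `ℚ ⊗ Y`. -/
abbrev QY : Type := ℚ ⊗[ℤ] C.Y

/-- The canonical map `Y → ℚ ⊗ Y`. -/
def ι : C.Y →ₗ[ℤ] C.QY := TensorProduct.mk ℤ ℚ C.Y 1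

/-- The finite set of positive coroots. -/
def posCoroots : Finset C.Y := C.pos.image C.coroot

/-- Half the sum of the positive coroots, as an element of `ℚ ⊗ Y`. -/
def rhoCheck : C.QY := (2⁻¹ : ℚ) ⊗ₜ[ℤ] (∑ β ∈ C.posCoroots, β)

/-- The set of Kostant partitions of `v ∈ ℚ ⊗ Y`: functions
`φ : 𝔯∨₊ → ℤ≥0` with `Σ_α φ(α)·α = v`. -/
def KostantSet (v : C.QY) : Set (↥C.posCoroots → ℕ) :=
  {φ | ∑ β : ↥C.posCoroots, (φ β) • C.ι (β : C.Y) = v}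

/-- Kostant's partition function. -/
def KostantP (v : C.QY) : ℕ := (C.KostantSet v).ncard

/-- The action of `w ∈ W` on `ℚ ⊗ Y`. -/
def actQ (w : C.W) : C.QY →ₗ[ℤ] C.QY :=
  LinearMap.lTensor ℚ ((DistribMulAction.toAddMonoidHom C.Y w).toIntLinearMap)

/-- The simple roots: positive roots which are not sums of two positive
roots. -/
def simpleRoots : Finset C.X :=
  C.pos.filter fun α => ¬ ∃ β ∈ C.pos, ∃ γ ∈ C.pos, α = β + γ

end Ctx

end SemiInf

/-!
An element of the finite Weyl group is determined by the set of positive roots it makes negative: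
an element preserving the positive roots is trivial, by the exchange property of words in the
simple reflections. Let `N(λ)` be the set of positive roots on which `λ` is negative. If `v(λ)` is
dominant, then `v` inverts every root in `N(λ)`. Conversely, for a regular `η` and large `M`, an
element making `M λ + η` dominant inverts exactly `N(λ)`. Hence `v_λ` is the element with inversion
set `N(λ)`. On the affine side, comparing the sums defining the lengths term by term gives
`ℓ(t_λ u) + #N(λ) = ℓ(t_λ) + #(Inv(u⁻¹) ∆ N(λ))`, which is minimal exactly when `u⁻¹ = v_λ`.
-/

namespace SemiInf.Ctx

variable {C : Ctx} {α β : C.X} {r s : C.W}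

/-- `s` acts on `X` and on `Y` as the reflection in `α` and its coroot. This is a relation rather
than a function of `α` because `Ctx` does not come with a choice of reflections. -/
def IsReflection (C : Ctx) (α : C.X) (s : C.W) : Prop :=
  (∀ x : C.X, s • x = x - C.pair (C.coroot α) x • α) ∧
    ∀ y : C.Y, s • y = y - C.pair y α • C.coroot α

/-! ### Reflections -/

theorem IsReflection.pair_smul_left (hs : C.IsReflection α s) (y : C.Y) (x : C.X) :
    C.pair (s • y) x = C.pair y x - C.pair y α * C.pair (C.coroot α) x := by
  simp [hs.2]

namespace IsRootDatum

theorem exists_isReflection (h : C.IsRootDatum) (hα : α ∈ C.roots) : ∃ s, C.IsReflection α s :=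
  h.isReflection α hα

theorem eq_of_smul_eq (h : C.IsRootDatum) {u v : C.W} (huv : ∀ x : C.X, u • x = v • x) :
    u = v := by
  refine (inv_mul_eq_one.1 (h.faithful_X (v⁻¹ * u) fun x => ?_)).symm
  rw [mul_smul, huv, inv_smul_smul]

theorem pair_smul_left (h : C.IsRootDatum) (w : C.W) (y : C.Y) (x : C.X) :
    C.pair (w • y) x = C.pair y (w⁻¹ • x) := by
  rw [← h.pair_inv w y, smul_inv_smul]

theorem pair_coroot_smul (h : C.IsRootDatum) (w : C.W) (hα : α ∈ C.roots) (x : C.X) :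
    C.pair (C.coroot (w • α)) x = C.pair (C.coroot α) (w⁻¹ • x) := by
  rw [← h.smul_coroot w α hα, h.pair_smul_left]

theorem eq_of_isReflection (h : C.IsRootDatum) (hr : C.IsReflection α r)
    (hs : C.IsReflection α s) : r = s :=
  h.eq_of_smul_eq fun x => by rw [hr.1, hs.1]

theorem isReflection_conj (h : C.IsRootDatum) (hα : α ∈ C.roots) (hs : C.IsReflection α s)
    (w : C.W) : C.IsReflection (w • α) (w * s * w⁻¹) := by
  refine ⟨fun x => ?_, fun y => ?_⟩
  · rw [mul_smul, mul_smul, hs.1, h.pair_coroot_smul w hα, smul_sub, smul_inv_smul, smul_comm]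
  · rw [mul_smul, mul_smul, hs.2, h.pair_smul_left, inv_inv, ← h.smul_coroot w α hα, smul_sub,
      smul_inv_smul, smul_comm]

theorem isReflection_smul_self (h : C.IsRootDatum) (hα : α ∈ C.roots)
    (hs : C.IsReflection α s) : s • α = -α := by
  rw [hs.1, h.coroot_self α hα]
  module

theorem isReflection_mul_self (h : C.IsRootDatum) (hα : α ∈ C.roots)
    (hs : C.IsReflection α s) : s * s = 1 := by
  refine h.eq_of_smul_eq fun x => ?_
  rw [mul_smul, one_smul, hs.1 x, smul_sub, smul_comm, h.isReflection_smul_self hα hs, hs.1]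
  module

theorem isReflection_neg (h : C.IsRootDatum) (hα : α ∈ C.roots) (hs : C.IsReflection α s) :
    C.IsReflection (-α) s := by
  simpa only [h.isReflection_smul_self hα hs, mul_inv_cancel_right] using
    h.isReflection_conj hα hs s

/-! ### Positive roots -/

theorem notMem_pos_iff (h : C.IsRootDatum) (hα : α ∈ C.roots) : α ∉ C.pos ↔ -α ∈ C.pos :=
  ⟨(h.root_decomp α hα).resolve_left, fun hneg hpos => h.pos_neg_disjoint α hpos hneg⟩

theorem smul_mem_roots (h : C.IsRootDatum) (w : C.W) (hα : α ∈ C.pos) : w • α ∈ C.roots :=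
  h.roots_stable w α (h.pos_subset hα)

-- The root is `s_δ s_γ δ`.
theorem three_smul_sub_two_smul_mem_roots (h : C.IsRootDatum) {γ δ : C.X} (hγ : γ ∈ C.roots)
    (hδ : δ ∈ C.roots) (hγδ : C.coroot γ = C.coroot δ) :
    (3 : ℤ) • δ - (2 : ℤ) • γ ∈ C.roots ∧ C.coroot ((3 : ℤ) • δ - (2 : ℤ) • γ) = C.coroot δ := by
  obtain ⟨s, hs⟩ := h.exists_isReflection hγ
  obtain ⟨r, hr⟩ := h.exists_isReflection hδ
  have hγγ : C.pair (C.coroot δ) γ = 2 := hγδ ▸ h.coroot_self γ hγ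
  have hsδ := h.roots_stable s δ hδ
  have hroot : r • s • δ = (3 : ℤ) • δ - (2 : ℤ) • γ := by
    simp only [hs.1, hr.1, hγδ, map_sub, map_zsmul, h.coroot_self δ hδ, hγγ]
    module
  have hcoroot : C.coroot (r • s • δ) = C.coroot δ := by
    rw [← h.smul_coroot r _ hsδ, ← h.smul_coroot s δ hδ]
    simp only [hs.2, hr.2, hγδ, map_sub, map_zsmul, AddMonoidHom.sub_apply,
      AddMonoidHom.coe_smul, Pi.smul_apply, h.coroot_self δ hδ, hγγ]
    module
  exact hroot ▸ ⟨h.roots_stable r _ hsδ, hcoroot⟩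

-- If `γ∨ = δ∨` and `⟨y, δ⟩` is maximal among the roots with that coroot, then comparing with the
-- root `3δ - 2γ` gives `⟨y, δ⟩ ≤ ⟨y, γ⟩`.
theorem coroot_injOn (h : C.IsRootDatum) : Set.InjOn C.coroot C.roots := by
  intro α hα β hβ hαβ
  refine h.perfect_right.1 (AddMonoidHom.ext fun y => ?_)
  obtain ⟨δ, hδ, hmax⟩ := (C.roots.filter (C.coroot · = C.coroot α)).exists_max_image (C.pair y)
    ⟨α, Finset.mem_filter.2 ⟨hα, rfl⟩⟩
  simp only [Finset.mem_filter] at hδ hmax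
  have pair_eq : ∀ γ ∈ C.roots, C.coroot γ = C.coroot α → C.pair y γ = C.pair y δ := by
    intro γ hγ hγα
    obtain ⟨hroot, hcoroot⟩ :=
      h.three_smul_sub_two_smul_mem_roots hγ hδ.1 (hγα.trans hδ.2.symm)
    have hle := hmax _ ⟨hroot, hcoroot.trans hδ.2⟩
    rw [map_sub, map_zsmul, map_zsmul, smul_eq_mul, smul_eq_mul] at hle
    exact le_antisymm (hmax γ ⟨hγ, hγα⟩) (by linarith)
  exact (pair_eq α hα rfl).trans (pair_eq β hβ hαβ.symm).symm

end IsRootDatum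

/-- The pairing of `X` and `Y` as a `ℤ`-bilinear map, with `X` as the first argument as in
Mathlib's `RootPairing`. -/
def bilin (C : Ctx) : C.X →ₗ[ℤ] C.Y →ₗ[ℤ] ℤ :=
  (addMonoidHomLequivInt ℤ).toLinearMap ∘ₗ C.pair.flip.toIntLinearMap

namespace IsRootDatum

theorem isPerfPair_bilin (h : C.IsRootDatum) : C.bilin.IsPerfPair where
  bijective_left := (addMonoidHomLequivInt ℤ).bijective.comp h.perfect_right
  bijective_right := (addMonoidHomLequivInt (A := C.X) (B := ℤ) ℤ).bijective.comp h.perfect_left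

/-- The root datum as a Mathlib `RootPairing`, giving access to the theory of root strings. -/
def rootPairing (h : C.IsRootDatum) : RootPairing C.roots ℤ C.X C.Y :=
  have := h.free_X
  have := h.isPerfPair_bilin
  .mk' C.bilin (.subtype _) ⟨fun α => C.coroot α, h.coroot_injOn.injective⟩
    (fun α => h.coroot_self α α.2)
    (by
      rintro α _ ⟨β, rfl⟩
      obtain ⟨s, hs⟩ := h.exists_isReflection α.2
      exact ⟨⟨s • β, h.roots_stable s β β.2⟩, hs.1 β⟩)
    (by
      rintro α _ ⟨β, rfl⟩
      obtain ⟨s, hs⟩ := h.exists_isReflection α.2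
      exact ⟨⟨s • β, h.roots_stable s β β.2⟩,
        (h.smul_coroot s β β.2).symm.trans (hs.2 (C.coroot β))⟩)

theorem sub_mem_roots (h : C.IsRootDatum) (hα : α ∈ C.roots) (hβ : β ∈ C.roots) (hne : β ≠ α)
    (hpair : 0 < C.pair (C.coroot α) β) : β - α ∈ C.roots := by
  have : h.rootPairing.IsCrystallographic := ⟨fun i j => ⟨h.rootPairing.pairing i j, rfl⟩⟩
  have hpos : 0 < h.rootPairing.pairingIn ℤ ⟨β, hβ⟩ ⟨α, hα⟩ :=
    hpair.trans_eq (h.rootPairing.algebraMap_pairingIn ℤ ⟨β, hβ⟩ ⟨α, hα⟩).symm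
  obtain ⟨γ, hγ⟩ := h.rootPairing.root_sub_root_mem_of_pairingIn_pos hpos (by simpa using hne)
  exact (show γ.1 = β - α from hγ) ▸ γ.2

/-! ### Simple roots -/

theorem simpleRoots_subset_pos : C.simpleRoots ⊆ C.pos :=
  Finset.filter_subset _ _

theorem sub_mem_pos (h : C.IsRootDatum) (hα : α ∈ C.simpleRoots) (hβ : β ∈ C.pos) (hne : β ≠ α)
    (hpair : 0 < C.pair (C.coroot α) β) : β - α ∈ C.pos := by
  obtain ⟨hαpos, hind⟩ := Finset.mem_filter.1 hα
  by_contra hnot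
  rw [h.notMem_pos_iff (h.sub_mem_roots (h.pos_subset hαpos) (h.pos_subset hβ) hne hpair),
    neg_sub] at hnot
  exact hind ⟨α - β, hnot, β, hβ, (sub_add_cancel α β).symm⟩

theorem eq_and_eq_of_add_eq_nsmul (h : C.IsRootDatum) {γ : C.X} (hα : α ∈ C.simpleRoots)
    (hβ : β ∈ C.pos) (hγ : γ ∈ C.pos) {n : ℕ} (hsum : β + γ = n • α) : β = α ∧ γ = α := by
  have hαroot := h.pos_subset (simpleRoots_subset_pos hα)
  induction n generalizing β γ with
  | zero =>
    rw [zero_smul, add_eq_zero_iff_neg_eq] at hsum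
    exact absurd (hsum ▸ hγ) (h.pos_neg_disjoint β hβ)
  | succ n ih =>
    wlog hpair : 0 < C.pair (C.coroot α) β generalizing β γ
    · refine (this hγ hβ (by rwa [add_comm]) ?_).symm
      have htwo := congrArg (C.pair (C.coroot α)) hsum
      rw [map_add, map_nsmul, h.coroot_self α hαroot, nsmul_eq_mul] at htwo
      push_cast at htwo
      linarith
    by_cases hne : β = α
    · have hγn : γ = n • α := by
        rw [hne, succ_nsmul'] at hsum
        exact add_left_cancel hsum
      have hn := h.reduced α hαroot n (by simpa [← hγn] using h.pos_subset hγ)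
      obtain rfl : n = 1 := by omega
      exact ⟨hne, hγn.trans (one_smul ℕ α)⟩
    · have hsub : β - α = α :=
        (ih (h.sub_mem_pos hα hβ hne hpair) hγ (by rw [sub_add_eq_add_sub, hsum]; module)).1
      have hβ2 : β = (2 : ℤ) • α := by rw [two_smul, ← sub_eq_iff_eq_add, hsub]
      have := h.reduced α hαroot 2 (hβ2 ▸ h.pos_subset hβ)
      omega

theorem isReflection_smul_mem_pos (h : C.IsRootDatum) (hα : α ∈ C.simpleRoots)
    (hs : C.IsReflection α s) (hβ : β ∈ C.pos) (hne : β ≠ α) : s • β ∈ C.pos := by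
  by_contra hneg
  rw [h.notMem_pos_iff (h.smul_mem_roots s hβ)] at hneg
  have hsum : β + -(s • β) = C.pair (C.coroot α) β • α := by rw [hs.1]; abel
  have hcoeff : 0 ≤ C.pair (C.coroot α) β := by
    obtain ⟨η, hη⟩ := h.exists_regular_Y
    have hheight := congrArg (C.pair η) hsum
    rw [map_add, map_zsmul, smul_eq_mul] at hheight
    refine nonneg_of_mul_nonneg_left ?_ (hη α (simpleRoots_subset_pos hα))
    exact hheight ▸ (add_pos (hη β hβ) (hη _ hneg)).le
  obtain ⟨n, hn⟩ := Int.eq_ofNat_of_zero_le hcoeff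
  rw [hn, natCast_zsmul] at hsum
  exact hne (h.eq_and_eq_of_add_eq_nsmul hα hβ hneg hsum).1

theorem mem_closure_simpleRoots (h : C.IsRootDatum) (hβ : β ∈ C.pos) :
    β ∈ AddSubmonoid.closure (C.simpleRoots : Set C.X) := by
  obtain ⟨η, hη⟩ := h.exists_regular_Y
  induction hn : (C.pair η β).toNat using Nat.strong_induction_on generalizing β with
  | _ n ih =>
    by_cases hsimple : β ∈ C.simpleRoots
    · exact AddSubmonoid.subset_closure hsimple
    obtain ⟨γ, hγ, δ, hδ, rfl⟩ : ∃ γ ∈ C.pos, ∃ δ ∈ C.pos, β = γ + δ := by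
      simpa [simpleRoots, hβ] using hsimple
    have hγη := hη γ hγ
    have hδη := hη δ hδ
    rw [map_add] at hn
    exact add_mem (ih _ (by omega) hγ rfl) (ih _ (by omega) hδ rfl)

theorem exists_simpleRoot_pair_pos (h : C.IsRootDatum) (hβ : β ∈ C.pos) :
    ∃ α ∈ C.simpleRoots, 0 < C.pair (C.coroot β) α := by
  by_contra! hnonpos
  have hle : ∀ x ∈ AddSubmonoid.closure (C.simpleRoots : Set C.X), C.pair (C.coroot β) x ≤ 0 := by
    intro x hx
    induction hx using AddSubmonoid.closure_induction with
    | mem x hx => exact hnonpos x hx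
    | zero => exact (map_zero _).le
    | add x y _ _ hx hy => exact (map_add _ x y).trans_le (add_nonpos hx hy)
  have htwo := h.coroot_self β (h.pos_subset hβ) ▸ hle β (h.mem_closure_simpleRoots hβ)
  omega

end IsRootDatum

/-! ### Words in the simple reflections -/

section Words

open scoped Pointwise

/-- The set of simple reflections. Words of length `n` in these are encoded below as the pointwise
power `C.simpleReflections ^ n`. -/
def simpleReflections (C : Ctx) : Set C.W := {s | ∃ α ∈ C.simpleRoots, C.IsReflection α s}

namespace IsRootDatum

theorem mem_closure_simpleReflections (h : C.IsRootDatum) (hβ : β ∈ C.pos)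
    (hs : C.IsReflection β s) : s ∈ Subgroup.closure C.simpleReflections := by
  obtain ⟨ξ, hξ⟩ := h.exists_regular_X
  induction hn : (C.pair (C.coroot β) ξ).toNat using Nat.strong_induction_on
    generalizing β s with
  | _ n ih =>
    obtain ⟨α, hα, hpair⟩ := h.exists_simpleRoot_pair_pos hβ
    by_cases hne : β = α
    · exact Subgroup.subset_closure ⟨α, hα, hne ▸ hs⟩
    have hαpos := simpleRoots_subset_pos hα
    obtain ⟨r, hr⟩ := h.exists_isReflection (h.pos_subset hαpos)
    have hrβ := h.isReflection_smul_mem_pos hα hr hβ hne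
    have hlt : C.pair (C.coroot (r • β)) ξ < C.pair (C.coroot β) ξ := by
      rw [← h.smul_coroot r β (h.pos_subset hβ), hr.pair_smul_left]
      exact sub_lt_self _ (mul_pos hpair (hξ α hαpos))
    have hrβξ := hξ _ hrβ
    have hconj := ih _ (by omega) hrβ (h.isReflection_conj (h.pos_subset hβ) hs r) rfl
    have hrmem : r ∈ Subgroup.closure C.simpleReflections :=
      Subgroup.subset_closure ⟨α, hα, hr⟩
    rwa [Subgroup.mul_mem_cancel_right _ (inv_mem hrmem),
      Subgroup.mul_mem_cancel_left _ hrmem] at hconj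

theorem closure_simpleReflections (h : C.IsRootDatum) :
    Subgroup.closure C.simpleReflections = ⊤ := by
  refine (Subgroup.eq_top_iff' _).2 fun w => (Subgroup.closure_le _).2 ?_ (h.weyl_gen w)
  rintro s ⟨α, hα, hs⟩
  rcases h.root_decomp α hα with hpos | hneg
  · exact h.mem_closure_simpleReflections hpos hs
  · exact h.mem_closure_simpleReflections hneg (h.isReflection_neg hα hs)

theorem exists_mem_simpleReflections_pow (h : C.IsRootDatum) (w : C.W) :
    ∃ n, w ∈ C.simpleReflections ^ n := by
  have hw : w ∈ Submonoid.closure C.simpleReflections := by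
    simp [← Subgroup.closure_toSubmonoid_of_finite, h.closure_simpleReflections]
  induction hw using Submonoid.closure_induction with
  | mem s hs => exact ⟨1, by rwa [pow_one]⟩
  | one => exact ⟨0, by simp⟩
  | mul u v _ _ hu hv =>
    obtain ⟨m, hm⟩ := hu
    obtain ⟨n, hn⟩ := hv
    exact ⟨m + n, pow_add C.simpleReflections m n ▸ Set.mul_mem_mul hm hn⟩

theorem exists_mul_mem_simpleReflections_pow (h : C.IsRootDatum) {n : ℕ} {u : C.W}
    (hu : u ∈ C.simpleReflections ^ n) (hα : α ∈ C.simpleRoots) (hs : C.IsReflection α s)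
    (hneg : -(u • α) ∈ C.pos) : ∃ m < n, u * s ∈ C.simpleReflections ^ m := by
  have hαpos := simpleRoots_subset_pos hα
  induction n generalizing u with
  | zero =>
    obtain rfl : u = 1 := by simpa using hu
    exact absurd (one_smul C.W α ▸ hneg) (h.pos_neg_disjoint α hαpos)
  | succ n ih =>
    obtain ⟨r, ⟨γ, hγ, hr⟩, v, hv, rfl⟩ := Set.mem_mul.1 (pow_succ' C.simpleReflections n ▸ hu)
    by_cases hvα : v • α ∈ C.pos
    · have hrv : v • α = γ := by
        by_contra hne
        exact h.pos_neg_disjoint _ (h.isReflection_smul_mem_pos hγ hr hvα hne)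
          (mul_smul r v α ▸ hneg)
      have hconj : v * s * v⁻¹ = r :=
        h.eq_of_isReflection (hrv ▸ h.isReflection_conj (h.pos_subset hαpos) hs v) hr
      have hcancel : r * v * s = v := by
        rw [mul_assoc, mul_inv_eq_iff_eq_mul.1 hconj, ← mul_assoc,
          h.isReflection_mul_self (h.pos_subset (simpleRoots_subset_pos hγ)) hr, one_mul]
      exact ⟨n, n.lt_succ_self, by rwa [hcancel]⟩
    · obtain ⟨m, hm, hvs⟩ := ih hv ((h.notMem_pos_iff (h.smul_mem_roots v hαpos)).1 hvα)
      refine ⟨m + 1, by omega, ?_⟩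
      rw [mul_assoc, pow_succ']
      exact Set.mul_mem_mul ⟨γ, hγ, hr⟩ hvs

theorem eq_one_of_smul_mem_pos (h : C.IsRootDatum) {w : C.W}
    (hw : ∀ β ∈ C.pos, w • β ∈ C.pos) : w = 1 := by
  obtain ⟨n, hn⟩ := h.exists_mem_simpleReflections_pow w
  induction n using Nat.strong_induction_on with
  | _ n ih =>
    cases n with
    | zero => simpa using hn
    | succ n =>
      obtain ⟨u, hu, s, ⟨α, hα, hs⟩, rfl⟩ := Set.mem_mul.1 (pow_succ C.simpleReflections n ▸ hn)
      have hαpos := simpleRoots_subset_pos hα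
      have hneg : -(u • α) ∈ C.pos := by
        simpa only [mul_smul, h.isReflection_smul_self (h.pos_subset hαpos) hs, smul_neg]
          using hw α hαpos
      obtain ⟨m, hm, hus⟩ := h.exists_mul_mem_simpleReflections_pow hu hα hs hneg
      exact ih m (by omega) hus

end IsRootDatum

end Words

/-! ### Inversion sets -/

/-- The inversion set of `w`: the positive roots which `w` makes negative. -/
def inversions (C : Ctx) (w : C.W) : Finset C.X := C.pos.filter fun β => w • β ∉ C.pos

/-- The positive roots on which `l` is negative; `l` is dominant iff there are none. -/
def negRoots (C : Ctx) (l : C.Y) : Finset C.X := C.pos.filter fun β => C.pair l β < 0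

namespace IsRootDatum

theorem lenW_eq_card_inversions (h : C.IsRootDatum) (w : C.W) :
    C.lenW w = (C.inversions w).card :=
  congrArg Finset.card (Finset.filter_congr fun _ hβ =>
    (h.notMem_pos_iff (h.smul_mem_roots w hβ)).symm)

theorem inversions_injective (h : C.IsRootDatum) : Function.Injective C.inversions := by
  intro u v huv
  have hiff : ∀ β ∈ C.pos, (u • β ∉ C.pos ↔ v • β ∉ C.pos) := by
    simpa only [inversions, Finset.filter_inj'] using huv
  refine mul_inv_eq_one.1 (h.eq_one_of_smul_mem_pos fun β hβ => ?_)
  rw [mul_smul]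
  rcases h.root_decomp _ (h.smul_mem_roots v⁻¹ hβ) with hpos | hneg
  · simpa [hβ] using hiff _ hpos
  · have hu : -(u • v⁻¹ • β) ∉ C.pos := by
      simpa [h.pos_neg_disjoint β hβ] using hiff _ hneg
    by_contra hnot
    exact hu ((h.notMem_pos_iff (h.roots_stable u _ (h.smul_mem_roots v⁻¹ hβ))).1 hnot)

theorem exists_smul_mem_Ypos (h : C.IsRootDatum) (l : C.Y) : ∃ v : C.W, v • l ∈ C.Ypos := by
  obtain ⟨ξ, hξ⟩ := h.exists_regular_X
  obtain ⟨v, hmax⟩ := Finite.exists_max fun v : C.W => C.pair (v • l) ξ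
  refine ⟨v, fun α hα => ?_⟩
  obtain ⟨s, hs⟩ := h.exists_isReflection (h.pos_subset hα)
  have hle := hmax (s * v)
  rw [mul_smul, hs.pair_smul_left, sub_le_self_iff] at hle
  exact nonneg_of_mul_nonneg_left hle (hξ α hα)

theorem negRoots_subset_inversions (h : C.IsRootDatum) {v : C.W} {l : C.Y}
    (hv : v • l ∈ C.Ypos) : C.negRoots l ⊆ C.inversions v := by
  refine Finset.monotone_filter_right _ fun β _ hneg hpos => ?_
  exact hneg.not_ge (h.pair_inv v l β ▸ hv _ hpos)

theorem smul_mem_Ypos_of_inversions_eq (h : C.IsRootDatum) {v : C.W} {l : C.Y}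
    (hv : C.inversions v = C.negRoots l) : v • l ∈ C.Ypos := by
  have hiff : ∀ β ∈ C.pos, (v • β ∉ C.pos ↔ C.pair l β < 0) := by
    simpa only [inversions, negRoots, Finset.filter_inj'] using hv
  intro α hα
  rw [h.pair_smul_left]
  rcases h.root_decomp _ (h.smul_mem_roots v⁻¹ hα) with hpos | hneg
  · simpa [hα] using hiff _ hpos
  · have hlt : C.pair l (-(v⁻¹ • α)) < 0 :=
      (hiff _ hneg).1 (by simpa using h.pos_neg_disjoint α hα)
    rw [map_neg] at hlt
    omega

-- For `η` regular and `M` large, `M • l + η` has the sign of `l` on each positive root, zero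
-- counting as positive.
theorem exists_inversions_eq_negRoots (h : C.IsRootDatum) (l : C.Y) :
    ∃ v, C.inversions v = C.negRoots l := by
  obtain ⟨η, hη⟩ := h.exists_regular_Y
  obtain ⟨M, hM⟩ : ∃ M : ℤ, ∀ β ∈ C.pos, C.pair η β < M :=
    ⟨(∑ β ∈ C.pos, C.pair η β) + 1, fun β hβ => Int.lt_add_one_of_le
      (Finset.single_le_sum (f := fun β => C.pair η β) (fun γ hγ => (hη γ hγ).le) hβ)⟩
  obtain ⟨v, hv⟩ := h.exists_smul_mem_Ypos (M • l + η)
  have hperturb (β : C.X) : C.pair (M • l + η) β = M * C.pair l β + C.pair η β := by simp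
  refine ⟨v, Finset.filter_congr fun β hβ => ⟨fun hnot => ?_, fun hlt hpos => ?_⟩⟩
  · have hle := hv _ ((h.notMem_pos_iff (h.smul_mem_roots v hβ)).1 hnot)
    rw [map_neg, h.pair_inv, hperturb] at hle
    nlinarith [hη β hβ, hM β hβ]
  · have hle := hv _ hpos
    rw [h.pair_inv, hperturb] at hle
    nlinarith [hη β hβ, hM β hβ]

end IsRootDatum

/-! ### The length function on `W_ext` -/

/-- The positive root among `α` and `-α`, for a root `α`. -/
def posRep (C : Ctx) (α : C.X) : C.X := if α ∈ C.pos then α else -α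

namespace IsRootDatum

theorem posRep_mem_pos (h : C.IsRootDatum) (hα : α ∈ C.roots) : C.posRep α ∈ C.pos := by
  unfold posRep
  split_ifs with hpos
  · exact hpos
  · exact (h.notMem_pos_iff hα).1 hpos

theorem posRep_inv_smul_posRep_smul (h : C.IsRootDatum) (u : C.W) (hα : α ∈ C.pos) :
    C.posRep (u⁻¹ • C.posRep (u • α)) = α := by
  by_cases hpos : u • α ∈ C.pos <;> simp [posRep, hpos, hα, h.pos_neg_disjoint α hα]

-- The sum defining `len` runs over `α`; substitute the positive root `β` among `± u • α`.
theorem len_t_mul_σ (h : C.IsRootDatum) (l : C.Y) (u : C.W) :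
    C.len (C.t l * C.σ u) = ∑ β ∈ C.pos,
      if u⁻¹ • β ∈ C.pos then (C.pair l β).natAbs else (1 + C.pair l β).natAbs := by
  have hleft : (C.t l * C.σ u).left = Multiplicative.ofAdd l := by simp [t, σ]
  have hright : (C.t l * C.σ u).right = u := by simp [t, σ]
  rw [len, hleft, hright]
  refine Finset.sum_bij' (fun α _ => C.posRep (u • α)) (fun β _ => C.posRep (u⁻¹ • β))
    (fun α hα => h.posRep_mem_pos (h.smul_mem_roots u hα))
    (fun β hβ => h.posRep_mem_pos (h.smul_mem_roots u⁻¹ hβ))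
    (fun α hα => h.posRep_inv_smul_posRep_smul u hα)
    (fun β hβ => by simpa using h.posRep_inv_smul_posRep_smul u⁻¹ hβ) fun α hα => ?_
  rw [h.pair_smul_left, inv_inv, toAdd_ofAdd]
  by_cases hpos : u • α ∈ C.pos
  · simp [posRep, hpos, hα]
  · simp [posRep, hpos, h.pos_neg_disjoint α hα, sub_eq_add_neg]

theorem len_t (h : C.IsRootDatum) (l : C.Y) :
    C.len (C.t l) = ∑ β ∈ C.pos, (C.pair l β).natAbs := by
  have ht : C.t l = C.t l * C.σ 1 := by simp [σ]
  rw [ht, h.len_t_mul_σ]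
  exact Finset.sum_congr rfl fun β hβ => by rw [inv_one, one_smul, if_pos hβ]

theorem len_t_mul_σ_add_card (h : C.IsRootDatum) (l : C.Y) (u : C.W) :
    C.len (C.t l * C.σ u) + (C.negRoots l).card =
      C.len (C.t l) + (symmDiff (C.inversions u⁻¹) (C.negRoots l)).card := by
  have hsymm : symmDiff (C.inversions u⁻¹) (C.negRoots l) =
      C.pos.filter fun β => u⁻¹ • β ∈ C.pos ↔ C.pair l β < 0 := by
    ext β
    simp only [Finset.mem_symmDiff, inversions, negRoots, Finset.mem_filter]
    tauto
  rw [h.len_t_mul_σ, h.len_t, hsymm, negRoots, Finset.card_filter, Finset.card_filter,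
    ← Finset.sum_add_distrib, ← Finset.sum_add_distrib]
  refine Finset.sum_congr rfl fun β _ => ?_
  by_cases hinv : u⁻¹ • β ∈ C.pos <;> by_cases hneg : C.pair l β < 0 <;>
    simp only [hinv, hneg, iff_true, iff_false, not_true, if_true, if_false] <;>
    omega

end IsRootDatum

end SemiInf.Ctx

/-- For `λ ∈ Y`: among the `v ∈ W_f` with `v(λ) ∈ Y₊` there is a unique element
`v_λ` of minimal length; `w_λ := t_λ v_λ⁻¹` is the unique element of minimal
length in the coset `t_λ W_f`, and `ℓ(w_λ) = ℓ(t_λ) − ℓ(v_λ)`. -/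
theorem statement4 (C : SemiInf.Ctx) (h : C.IsRootDatum) (l : C.Y) :
    ∃ v : C.W,
      (v • l ∈ C.Ypos ∧ ∀ v' : C.W, v' • l ∈ C.Ypos → C.lenW v ≤ C.lenW v') ∧
      (∀ v' : C.W,
        (v' • l ∈ C.Ypos ∧ ∀ v'' : C.W, v'' • l ∈ C.Ypos → C.lenW v' ≤ C.lenW v'') →
        v' = v) ∧
      (∀ u : C.W, C.len (C.t l * C.σ v⁻¹) ≤ C.len (C.t l * C.σ u)) ∧
      (∀ u : C.W,
        (∀ u' : C.W, C.len (C.t l * C.σ u) ≤ C.len (C.t l * C.σ u')) →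
        C.t l * C.σ u = C.t l * C.σ v⁻¹) ∧
      (C.len (C.t l * C.σ v⁻¹) : ℤ) = (C.len (C.t l) : ℤ) - (C.lenW v : ℤ) := by
  obtain ⟨v, hv⟩ := h.exists_inversions_eq_negRoots l
  have hdom : v • l ∈ C.Ypos := h.smul_mem_Ypos_of_inversions_eq hv
  have hlenW : C.lenW v = (C.negRoots l).card := hv ▸ h.lenW_eq_card_inversions v
  have hlen := h.len_t_mul_σ_add_card l
  have hlenv : C.len (C.t l * C.σ v⁻¹) + C.lenW v = C.len (C.t l) := by
    simpa [hv, hlenW] using hlen v⁻¹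
  refine ⟨v, ⟨hdom, fun v' hv' => ?_⟩, fun v' ⟨hv', hmin⟩ => ?_, fun u => ?_, fun u hmin => ?_, ?_⟩
  · rw [hlenW, h.lenW_eq_card_inversions]
    exact Finset.card_le_card (h.negRoots_subset_inversions hv')
  · have hcard := hmin v hdom
    rw [hlenW, h.lenW_eq_card_inversions] at hcard
    have heq := Finset.eq_of_subset_of_card_le (h.negRoots_subset_inversions hv') hcard
    exact h.inversions_injective (heq.symm.trans hv.symm)
  · have := hlen u
    omega
  · have hcard : (symmDiff (C.inversions u⁻¹) (C.negRoots l)).card = 0 := by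
      have := hlen u
      have := hmin v⁻¹
      omega
    have heq := Finset.symmDiff_eq_empty.1 (Finset.card_eq_zero.1 hcard)
    rw [← h.inversions_injective (heq.trans hv.symm), inv_inv]
  · omega
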